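/- Let n ≥ 2, q = exp(2πi/n), and ℏ ∈ ℂ. Then the bilinear product ⋆ defined on the space of functions F : ℤ/nℤ → ℂ[z,w] by (F ⋆ G)(m) = Σ_{j=0}^{n−1} Σ_{k,l ∈ ℤ/nℤ, k+l+j ≡ m} ((iℏ/2)^j/[j]_q!) · D_z^j(F(k)) · σ^j( D_w^j( γ^k(G(l)) ) ) is associative. -/

import Mathlib

noncomputable section

/-- The `q`-integer `[k]_q = 1 + q + ⋯ + q^(k-1)`. -/
def qint (q : ℂ) (k : ℕ) : ℂ := ∑ i ∈ Finset.range k, q ^ i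

/-- The `q`-factorial `[k]_q! = ∏_{i=1}^k [i]_q`. -/
def qfact (q : ℂ) (k : ℕ) : ℂ := ∏ i ∈ Finset.range k, qint q (i + 1)

/-- The polynomial algebra `A = ℂ[z,w]`, realized as `ℂ[w][z]` (outer variable `z`,
inner variable `w`). -/
abbrev PolyZW : Type := Polynomial (Polynomial ℂ)

/-- The algebra automorphism `σ` of `ℂ[z,w]`: `z ↦ q z`, `w ↦ w`. -/
def sigmaOp (q : ℂ) (f : PolyZW) : PolyZW :=
  f.comp (Polynomial.C (Polynomial.C q) * Polynomial.X)

/-- The algebra automorphism `τ` of `ℂ[z,w]`: `z ↦ z`, `w ↦ q⁻¹ w`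
(applied to each `z`-coefficient). -/
def tauOp (q : ℂ) (f : PolyZW) : PolyZW :=
  f.sum fun n p => Polynomial.C (p.comp (Polynomial.C q⁻¹ * Polynomial.X)) * Polynomial.X ^ n

/-- The automorphism `γ = σ ∘ τ` of `ℂ[z,w]`: `z ↦ q z`, `w ↦ q⁻¹ w`. -/
def gammaOp (q : ℂ) (f : PolyZW) : PolyZW := sigmaOp q (tauOp q f)

/-- The twisted difference operator `D_z f = (f - σ f)/((1-q) z)`; the division by `z` is
exact since `f - σ f` is divisible by `z`. -/
def Dz (q : ℂ) (f : PolyZW) : PolyZW :=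
  Polynomial.C (Polynomial.C (1 - q)⁻¹) * (f - sigmaOp q f).divX

/-- The twisted difference operator `D_w f = (f - τ f)/((1-q⁻¹) w)`; the division by `w` is
exact and performed on each `z`-coefficient. -/
def Dw (q : ℂ) (f : PolyZW) : PolyZW :=
  (f - tauOp q f).sum fun n p =>
    Polynomial.C (Polynomial.C (1 - q⁻¹)⁻¹ * p.divX) * Polynomial.X ^ n

/-- The star product on functions `ℤ/nℤ → ℂ[z,w]` (the underlying space of the complexified
crossed product `S(ℝ²)⋊ℤ_n`):
`(F ⋆ G)(m) = ∑_{j=0}^{n-1} ∑_{k+l+j ≡ m} ((iℏ/2)^j/[j]_q!) D_z^j(F(k)) σ^j(D_w^j(γ^k(G(l))))`. -/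
def qstar (n : ℕ) (hbar q : ℂ) (F G : ZMod n → PolyZW) : ZMod n → PolyZW :=
  fun m =>
    ∑ j ∈ Finset.range n, ∑ k ∈ Finset.range n,
      ((Complex.I * hbar / 2) ^ j / qfact q j) •
        ((Dz q)^[j] (F (k : ZMod n)) *
          (sigmaOp q)^[j] ((Dw q)^[j] ((gammaOp q)^[k]
            (G ((m : ZMod n) - (k : ZMod n) - (j : ZMod n))))))

open Polynomial in
theorem sigma_coeff (q : ℂ) (f : PolyZW) (a b : ℕ) :
    ((sigmaOp q f).coeff a).coeff b = q ^ a * (f.coeff a).coeff b := by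
  unfold sigmaOp
  rw [Polynomial.comp_C_mul_X_coeff, ← Polynomial.C_pow, mul_comm, Polynomial.coeff_C_mul]

theorem tau_eq (q : ℂ) (f : PolyZW) :
    tauOp q f = f.map (Polynomial.compRingHom (Polynomial.C q⁻¹ * Polynomial.X)) := by
  unfold tauOp
  rw [Polynomial.map, Polynomial.eval₂_eq_sum]
  rfl

theorem tau_coeff (q : ℂ) (f : PolyZW) (a b : ℕ) :
    ((tauOp q f).coeff a).coeff b = (q⁻¹) ^ b * (f.coeff a).coeff b := by
  rw [tau_eq, Polynomial.coeff_map, Polynomial.coe_compRingHom_apply,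
    Polynomial.comp_C_mul_X_coeff, mul_comm]

theorem Dz_coeff (q : ℂ) (f : PolyZW) (a b : ℕ) :
    ((Dz q f).coeff a).coeff b = (1 - q)⁻¹ * ((1 - q ^ (a + 1)) * (f.coeff (a + 1)).coeff b) := by
  unfold Dz
  rw [Polynomial.coeff_C_mul, Polynomial.coeff_C_mul, Polynomial.coeff_divX, Polynomial.coeff_sub,
    Polynomial.coeff_sub, sigma_coeff]
  ring

theorem Dw_coeff (q : ℂ) (f : PolyZW) (a b : ℕ) :
    ((Dw q f).coeff a).coeff b =
      (1 - q⁻¹)⁻¹ * ((1 - q⁻¹ ^ (b + 1)) * (f.coeff a).coeff (b + 1)) := by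
  unfold Dw
  have : ∀ g : PolyZW, ((g.sum fun n p =>
    Polynomial.C (Polynomial.C (1 - q⁻¹)⁻¹ * p.divX) * Polynomial.X ^ n).coeff a) =
      Polynomial.C (1 - q⁻¹)⁻¹ * (g.coeff a).divX := by
    intro g
    rw [Polynomial.sum_def, Polynomial.finsetSum_coeff]
    simp only [Polynomial.coeff_C_mul_X_pow]
    rw [Finset.sum_ite_eq]
    split_ifs with h
    · rfl
    · rw [Polynomial.notMem_support_iff.mp h]; simp
  rw [this, Polynomial.coeff_C_mul, Polynomial.coeff_divX, Polynomial.coeff_sub,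
    Polynomial.coeff_sub, tau_coeff]
  ring

theorem pext {f g : PolyZW} (h : ∀ a b, (f.coeff a).coeff b = (g.coeff a).coeff b) : f = g :=
  Polynomial.ext fun a => Polynomial.ext fun b => h a b

theorem smul_cc (c : ℂ) (f : PolyZW) (a b : ℕ) :
    ((c • f).coeff a).coeff b = c * (f.coeff a).coeff b := by
  simp [Polynomial.coeff_smul]

/-- `σ` as a linear map. -/
def SL (q : ℂ) : Module.End ℂ PolyZW where
  toFun := sigmaOp q
  map_add' f g := pext fun a b => by simp only [sigma_coeff, Polynomial.coeff_add]; ring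
  map_smul' c f := pext fun a b => by simp only [sigma_coeff, smul_cc, RingHom.id_apply]; ring

/-- `τ` as a linear map. -/
def TL (q : ℂ) : Module.End ℂ PolyZW where
  toFun := tauOp q
  map_add' f g := pext fun a b => by simp only [tau_coeff, Polynomial.coeff_add]; ring
  map_smul' c f := pext fun a b => by simp only [tau_coeff, smul_cc, RingHom.id_apply]; ring

/-- `D_z` as a linear map. -/
def ZL (q : ℂ) : Module.End ℂ PolyZW where
  toFun := Dz q
  map_add' f g := pext fun a b => by simp only [Dz_coeff, Polynomial.coeff_add]; ring
  map_smul' c f := pext fun a b => by simp only [Dz_coeff, smul_cc, RingHom.id_apply]; ring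

/-- `D_w` as a linear map. -/
def WL (q : ℂ) : Module.End ℂ PolyZW where
  toFun := Dw q
  map_add' f g := pext fun a b => by simp only [Dw_coeff, Polynomial.coeff_add]; ring
  map_smul' c f := pext fun a b => by simp only [Dw_coeff, smul_cc, RingHom.id_apply]; ring

theorem SL_coeff (q : ℂ) (f : PolyZW) (a b : ℕ) :
    ((SL q f).coeff a).coeff b = q ^ a * (f.coeff a).coeff b := sigma_coeff q f a b
theorem TL_coeff (q : ℂ) (f : PolyZW) (a b : ℕ) :
    ((TL q f).coeff a).coeff b = (q⁻¹) ^ b * (f.coeff a).coeff b := tau_coeff q f a b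
theorem ZL_coeff (q : ℂ) (f : PolyZW) (a b : ℕ) :
    ((ZL q f).coeff a).coeff b = (1 - q)⁻¹ * ((1 - q ^ (a + 1)) * (f.coeff (a + 1)).coeff b) :=
  Dz_coeff q f a b
theorem WL_coeff (q : ℂ) (f : PolyZW) (a b : ℕ) :
    ((WL q f).coeff a).coeff b =
      (1 - q⁻¹)⁻¹ * ((1 - q⁻¹ ^ (b + 1)) * (f.coeff a).coeff (b + 1)) := Dw_coeff q f a b

/-- Iterated `q`-commutation. -/
theorem pow_qcomm {A B : Module.End ℂ PolyZW} {c : ℂ} (h : ∀ f, A (B f) = c • B (A f))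
    (m k : ℕ) (f : PolyZW) : (A ^ m) ((B ^ k) f) = c ^ (m * k) • (B ^ k) ((A ^ m) f) := by
  have h1 : ∀ k f, A ((B ^ k) f) = c ^ k • (B ^ k) (A f) := by
    intro k
    induction k with
    | zero => simp
    | succ k ih =>
      intro f
      rw [pow_succ, Module.End.mul_apply, ih, h, map_smul, smul_smul, pow_succ]
      rfl
  induction m generalizing f with
  | zero => simp
  | succ m ih =>
    rw [pow_succ', Module.End.mul_apply, ih, map_smul, h1, smul_smul, ← pow_add,
      Module.End.mul_apply]
    congr 2; ring

theorem ZS (q : ℂ) (m k : ℕ) (f : PolyZW) :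
    (ZL q ^ m) ((SL q ^ k) f) = q ^ (m * k) • (SL q ^ k) ((ZL q ^ m) f) :=
  pow_qcomm (fun f => pext fun a b => by simp only [ZL_coeff, SL_coeff, smul_cc]; ring) m k f
theorem WT (q : ℂ) (m k : ℕ) (f : PolyZW) :
    (WL q ^ m) ((TL q ^ k) f) = (q⁻¹) ^ (m * k) • (TL q ^ k) ((WL q ^ m) f) :=
  pow_qcomm (fun f => pext fun a b => by simp only [WL_coeff, TL_coeff, smul_cc]; ring) m k f
theorem WS (q : ℂ) (m k : ℕ) (f : PolyZW) :
    (WL q ^ m) ((SL q ^ k) f) = (SL q ^ k) ((WL q ^ m) f) := by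
  simpa using pow_qcomm (A := WL q) (B := SL q) (c := 1)
    (fun f => pext fun a b => by simp only [WL_coeff, SL_coeff, smul_cc]; ring) m k f
theorem ZT (q : ℂ) (m k : ℕ) (f : PolyZW) :
    (ZL q ^ m) ((TL q ^ k) f) = (TL q ^ k) ((ZL q ^ m) f) := by
  simpa using pow_qcomm (A := ZL q) (B := TL q) (c := 1)
    (fun f => pext fun a b => by simp only [ZL_coeff, TL_coeff, smul_cc]; ring) m k f
theorem TS (q : ℂ) (m k : ℕ) (f : PolyZW) :
    (TL q ^ m) ((SL q ^ k) f) = (SL q ^ k) ((TL q ^ m) f) := by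
  simpa using pow_qcomm (A := TL q) (B := SL q) (c := 1)
    (fun f => pext fun a b => by simp only [TL_coeff, SL_coeff, smul_cc]; ring) m k f
theorem WZ (q : ℂ) (m k : ℕ) (f : PolyZW) :
    (WL q ^ m) ((ZL q ^ k) f) = (ZL q ^ k) ((WL q ^ m) f) := by
  simpa using pow_qcomm (A := WL q) (B := ZL q) (c := 1)
    (fun f => pext fun a b => by simp only [WL_coeff, ZL_coeff, smul_cc]; ring) m k f

/-- `γ` as a linear map. -/
def GL' (q : ℂ) : Module.End ℂ PolyZW := SL q * TL q

theorem GL_pow (q : ℂ) (k : ℕ) (f : PolyZW) : (GL' q ^ k) f = (SL q ^ k) ((TL q ^ k) f) := by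
  have : Commute (SL q) (TL q) := LinearMap.ext fun f => by simpa using (TS q 1 1 f).symm
  rw [GL', this.mul_pow]; rfl

theorem SL_mul (q : ℂ) (f g : PolyZW) : SL q (f * g) = SL q f * SL q g :=
  Polynomial.mul_comp f g _
theorem TL_mul (q : ℂ) (f g : PolyZW) : TL q (f * g) = TL q f * TL q g := by
  change tauOp q _ = tauOp q _ * tauOp q _
  simp only [tau_eq, Polynomial.map_mul]
theorem powmul {A : Module.End ℂ PolyZW} (h : ∀ f g, A (f * g) = A f * A g) (k : ℕ)
    (f g : PolyZW) : (A ^ k) (f * g) = (A ^ k) f * (A ^ k) g := by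
  induction k generalizing f g with
  | zero => simp
  | succ k ih => simp only [pow_succ, Module.End.mul_apply, h, ih]
theorem GL_mul (q : ℂ) (f g : PolyZW) : GL' q (f * g) = GL' q f * GL' q g := by
  simp only [GL', Module.End.mul_apply, TL_mul, SL_mul]

theorem ZL_spec (q : ℂ) (hq : q ≠ 1) (f : PolyZW) :
    Polynomial.X * ZL q f = (1 - q)⁻¹ • (f - SL q f) := by
  apply pext
  intro a b
  rw [smul_cc]
  cases a with
  | zero => simp [SL_coeff]
  | succ a =>
    rw [Polynomial.coeff_X_mul, ZL_coeff, Polynomial.coeff_sub, Polynomial.coeff_sub, SL_coeff]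
    ring
theorem WL_spec (q : ℂ) (f : PolyZW) :
    Polynomial.C Polynomial.X * WL q f = (1 - q⁻¹)⁻¹ • (f - TL q f) := by
  apply pext
  intro a b
  rw [smul_cc, Polynomial.coeff_C_mul]
  cases b with
  | zero => simp [TL_coeff]
  | succ b =>
    rw [Polynomial.coeff_X_mul, WL_coeff, Polynomial.coeff_sub, Polynomial.coeff_sub, TL_coeff]
    ring

theorem ZL_leib (q : ℂ) (hq : q ≠ 1) (f g : PolyZW) :
    ZL q (f * g) = ZL q f * SL q g + f * ZL q g := by
  apply mul_left_cancel₀ (Polynomial.X_ne_zero (R := Polynomial ℂ))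
  have e : Polynomial.X * (ZL q f * SL q g + f * ZL q g)
    = (Polynomial.X * ZL q f) * SL q g + f * (Polynomial.X * ZL q g) := by ring
  rw [e, ZL_spec q hq, ZL_spec q hq, ZL_spec q hq, smul_mul_assoc, mul_smul_comm, ← smul_add,
    SL_mul]
  congr 1; ring
theorem WL_leib (q : ℂ) (f g : PolyZW) :
    WL q (f * g) = WL q f * TL q g + f * WL q g := by
  apply mul_left_cancel₀ (Polynomial.C_ne_zero.mpr (Polynomial.X_ne_zero (R := ℂ)))
  have e : Polynomial.C Polynomial.X * (WL q f * TL q g + f * WL q g)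
    = (Polynomial.C Polynomial.X * WL q f) * TL q g
      + f * (Polynomial.C Polynomial.X * WL q g) := by ring
  rw [e, WL_spec q, WL_spec q, WL_spec q, smul_mul_assoc, mul_smul_comm, ← smul_add, TL_mul]
  congr 1; ring

theorem pow_n_zero_aux {A : Module.End ℂ PolyZW} {n : ℕ} (h : A ^ n = 0) {r : ℕ} (hr : n ≤ r)
    (f : PolyZW) : (A ^ r) f = 0 := by
  rw [pow_eq_zero_of_le hr h]; rfl

theorem ZL_pow_n (q : ℂ) (n : ℕ) (hn : 2 ≤ n) (h : q ^ n = 1) : ZL q ^ n = 0 := by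
  have key : ∀ m (f : PolyZW) a b, (((ZL q ^ m) f).coeff a).coeff b =
      (∏ i ∈ Finset.range m, ((1 - q)⁻¹ * (1 - q ^ (a + i + 1)))) * (f.coeff (a + m)).coeff b := by
    intro m
    induction m with
    | zero => simp
    | succ m ih =>
      intro f a b
      rw [pow_succ, Module.End.mul_apply, ih, ZL_coeff, Finset.prod_range_succ]
      ring_nf
  refine LinearMap.ext fun f => pext fun a b => ?_
  rw [key]
  have : ∃ i ∈ Finset.range n, (1 - q)⁻¹ * (1 - q ^ (a + i + 1)) = 0 := by
    refine ⟨n - 1 - a % n, Finset.mem_range.mpr (by omega), ?_⟩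
    have : a + (n - 1 - a % n) + 1 = n * (a / n + 1) := by
      have := Nat.div_add_mod a n
      have := Nat.mod_lt a (show 0 < n by omega)
      rw [mul_add]; omega
    rw [this, pow_mul, h]; simp
  obtain ⟨i, hi, h0⟩ := this
  rw [Finset.prod_eq_zero hi h0]; simp

theorem WL_pow_n (q : ℂ) (n : ℕ) (hn : 2 ≤ n) (h : q ^ n = 1) : WL q ^ n = 0 := by
  have key : ∀ m (f : PolyZW) a b, (((WL q ^ m) f).coeff a).coeff b =
      (∏ i ∈ Finset.range m, ((1 - q⁻¹)⁻¹ * (1 - q⁻¹ ^ (b + i + 1))))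
        * (f.coeff a).coeff (b + m) := by
    intro m
    induction m with
    | zero => simp
    | succ m ih =>
      intro f a b
      rw [pow_succ, Module.End.mul_apply, ih, WL_coeff, Finset.prod_range_succ]
      ring_nf
  refine LinearMap.ext fun f => pext fun a b => ?_
  rw [key]
  have : ∃ i ∈ Finset.range n, (1 - q⁻¹)⁻¹ * (1 - q⁻¹ ^ (b + i + 1)) = 0 := by
    refine ⟨n - 1 - b % n, Finset.mem_range.mpr (by omega), ?_⟩
    have : b + (n - 1 - b % n) + 1 = n * (b / n + 1) := by
      have := Nat.div_add_mod b n
      have := Nat.mod_lt b (show 0 < n by omega)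
      rw [mul_add]; omega
    rw [this, pow_mul, inv_pow q n, h]; simp
  obtain ⟨i, hi, h0⟩ := this
  rw [Finset.prod_eq_zero hi h0]; simp

theorem GL_pow_n (q : ℂ) (n : ℕ) (h : q ^ n = 1) : GL' q ^ n = 1 := by
  refine LinearMap.ext fun f => pext fun a b => ?_
  have k1 : ∀ m (f : PolyZW), (((GL' q ^ m) f).coeff a).coeff b =
      (q ^ m) ^ a * ((q ^ m)⁻¹ ^ b * (f.coeff a).coeff b) := by
    intro m
    induction m with
    | zero => simp
    | succ m ih =>
      intro f
      rw [pow_succ, Module.End.mul_apply, ih, GL', Module.End.mul_apply, SL_coeff, TL_coeff]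
      rw [pow_succ q m, mul_inv, mul_pow, mul_pow]; ring
  rw [k1, h]; simp

theorem qint_add (q : ℂ) (p s : ℕ) : qint q (p + s) = qint q p + q ^ p * qint q s := by
  unfold qint
  rw [Finset.sum_range_add, Finset.mul_sum]
  simp only [pow_add]

/-- Divided `q`-Leibniz rule, abstract form. -/
theorem leib (q : ℂ) (n : ℕ) (h0 : ∀ j, 0 < j → j < n → qint q j ≠ 0)
    (D : Module.End ℂ PolyZW) (T : ℕ → ℕ → PolyZW)
    (hT : ∀ p s, D (T p s) = T (p + 1) s + q ^ p • T p (s + 1)) (r : ℕ) (hr : r < n) :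
    (qfact q r)⁻¹ • (D ^ r) (T 0 0) =
      ∑ x ∈ Finset.HasAntidiagonal.antidiagonal r, ((qfact q x.1)⁻¹ * (qfact q x.2)⁻¹) • T x.1 x.2 := by
  have hs : ∀ j, qfact q (j + 1) = qfact q j * qint q (j + 1) := fun j =>
    Finset.prod_range_succ _ _
  have hinv : ∀ j, j < n → 0 < j → (qfact q (j - 1))⁻¹ = (qfact q j)⁻¹ * qint q j := by
    intro j hj hj0
    obtain ⟨i, rfl⟩ : ∃ i, j = i + 1 := ⟨j - 1, by omega⟩
    rw [hs, mul_inv, mul_assoc, inv_mul_cancel₀ (h0 _ hj0 hj), mul_one]; rfl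
  induction r with
  | zero => simp [qfact]
  | succ r ih =>
    have ih := ih (by omega)
    have hne := h0 (r + 1) (by omega) hr
    have e : (qfact q (r + 1))⁻¹ • (D ^ (r + 1)) (T 0 0)
        = (qint q (r + 1))⁻¹ • D ((qfact q r)⁻¹ • (D ^ r) (T 0 0)) := by
      rw [map_smul, smul_smul, hs, mul_inv, pow_succ', mul_comm]; rfl
    rw [e, ih, inv_smul_eq_iff₀ hne, map_sum, Finset.smul_sum]
    have lhs : ∑ x ∈ Finset.HasAntidiagonal.antidiagonal r,
          D (((qfact q x.1)⁻¹ * (qfact q x.2)⁻¹) • T x.1 x.2)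
        = ∑ x ∈ Finset.HasAntidiagonal.antidiagonal (r + 1),
            (qint q x.1 * ((qfact q x.1)⁻¹ * (qfact q x.2)⁻¹)) • T x.1 x.2
          + ∑ x ∈ Finset.HasAntidiagonal.antidiagonal (r + 1),
            (q ^ x.1 * qint q x.2 * ((qfact q x.1)⁻¹ * (qfact q x.2)⁻¹)) • T x.1 x.2 := by
      rw [Finset.Nat.antidiagonal_succ (n := r), Finset.sum_cons, Finset.sum_map]
      rw [← Finset.Nat.antidiagonal_succ, Finset.Nat.antidiagonal_succ' (n := r),
        Finset.sum_cons, Finset.sum_map]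
      have z : qint q 0 = 0 := by simp [qint]
      simp only [z, zero_mul, mul_zero, zero_smul, zero_add]
      rw [← Finset.sum_add_distrib]
      refine Finset.sum_congr rfl fun x hx => ?_
      have hx := Finset.HasAntidiagonal.mem_antidiagonal.mp hx
      have a1 := hinv (x.1 + 1) (by omega) (by omega)
      have a2 := hinv (x.2 + 1) (by omega) (by omega)
      simp only [Nat.add_sub_cancel] at a1 a2
      simp only [Function.Embedding.prodMap, Function.Embedding.coeFn_mk, Prod.map,
        Function.Embedding.refl_apply, Nat.succ_eq_add_one]
      rw [map_smul, hT, smul_add, smul_smul]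
      congr 2
      · rw [a1]; ring
      · rw [a2]; ring
    rw [lhs, ← Finset.sum_add_distrib]
    refine Finset.sum_congr rfl fun x hx => ?_
    have hx := Finset.HasAntidiagonal.mem_antidiagonal.mp hx
    rw [← add_smul, smul_smul, ← hx, qint_add]
    congr 1; ring

theorem ZL_leib_pow (q : ℂ) (hq : q ≠ 1) (n : ℕ) (h0 : ∀ j, 0 < j → j < n → qint q j ≠ 0)
    (r : ℕ) (hr : r < n) (f g : PolyZW) :
    (qfact q r)⁻¹ • (ZL q ^ r) (f * g) =
      ∑ x ∈ Finset.HasAntidiagonal.antidiagonal r, ((qfact q x.1)⁻¹ * (qfact q x.2)⁻¹) •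
        ((ZL q ^ x.1) f * (SL q ^ x.1) ((ZL q ^ x.2) g)) := by
  refine leib q n h0 (ZL q) (fun p s => (ZL q ^ p) f * (SL q ^ p) ((ZL q ^ s) g)) ?_ r hr
  intro p s
  have := ZS q 1 p ((ZL q ^ s) g)
  rw [pow_one, one_mul] at this
  simp only [ZL_leib q hq, this, pow_succ', Module.End.mul_apply, mul_smul_comm]

theorem WL_leib_pow (q : ℂ) (hq0 : q ≠ 0) (n : ℕ) (h0 : ∀ j, 0 < j → j < n → qint q j ≠ 0)
    (r : ℕ) (hr : r < n) (f g : PolyZW) :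
    (qfact q r)⁻¹ • (WL q ^ r) (f * g) =
      ∑ x ∈ Finset.HasAntidiagonal.antidiagonal r, ((qfact q x.1)⁻¹ * (qfact q x.2)⁻¹) •
        (q⁻¹ ^ (x.1 * x.2) • ((WL q ^ x.2) f * (TL q ^ x.2) ((WL q ^ x.1) g))) := by
  have := leib q n h0 (WL q) (fun s p => q⁻¹ ^ (s * p) •
    ((WL q ^ p) f * (TL q ^ p) ((WL q ^ s) g))) ?_ r hr
  · simpa using this
  intro s p
  have := WT q 1 p ((WL q ^ s) g)
  rw [pow_one, one_mul] at this
  simp only [map_smul, WL_leib q, this, pow_succ', Module.End.mul_apply, mul_smul_comm, smul_smul,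
    smul_add]
  rw [add_comm]
  congr 2
  · rw [← pow_add]; congr 1; ring
  · rw [mul_add, pow_add, mul_one, mul_left_comm, ← mul_pow, mul_inv_cancel₀ hq0]; simp

theorem term_eq (q : ℂ) (hq0 : q ≠ 0) (k l j a i : ℕ) (f g h : PolyZW) :
    ((ZL q ^ a) ((ZL q ^ j) f) *
      (SL q ^ a) ((ZL q ^ i) ((SL q ^ j) ((WL q ^ j) ((GL' q ^ k) g))))) *
      (SL q ^ (a + i)) ((WL q ^ (a + i)) ((GL' q ^ (k + l + j)) h)) =
    q⁻¹ ^ (a * j) • ((ZL q ^ (a + j)) f *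
      ((SL q ^ (a + j)) ((WL q ^ j) ((GL' q ^ k) ((ZL q ^ i) g))) *
       (SL q ^ (a + j)) ((TL q ^ j) ((WL q ^ a) ((GL' q ^ k)
        ((SL q ^ i) ((WL q ^ i) ((GL' q ^ l) h)))))))) := by
  simp only [GL_pow, ZS, WT, WS, ZT, TS, WZ, map_smul, mul_smul_comm, smul_mul_assoc, smul_smul]
  simp only [← Module.End.mul_apply, ← mul_assoc, ← pow_add]
  have e1 : a + (j + k) = a + j + k := by ring
  have e2 : a + i + (k + l + j) = a + j + (k + (i + l)) := by ring
  have e3 : k + l + j = j + (k + l) := by ring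
  have e4 : q⁻¹ ^ ((a + i) * (k + l + j) + j * k) * q ^ (i * j + i * k) =
      q⁻¹ ^ (a * j + (i * l + (a * k + a * l) + j * k)) := by
    have : (a + i) * (k + l + j) + j * k =
        (a * j + (i * l + (a * k + a * l) + j * k)) + (i * j + i * k) := by ring
    rw [this, pow_add, mul_assoc, ← mul_pow, inv_mul_cancel₀ hq0, one_pow, mul_one]
  rw [e4, e2, e1, e3]

/-- The `j`-th coefficient. -/
def cc (hbar q : ℂ) (j : ℕ) : ℂ := (Complex.I * hbar / 2) ^ j * (qfact q j)⁻¹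

theorem sum_range_zmod (n : ℕ) [NeZero n] (φ : ℕ → PolyZW) :
    ∑ k ∈ Finset.range n, φ k = ∑ k : ZMod n, φ k.val := by
  refine Finset.sum_bij' (fun k _ => (k : ZMod n)) (fun k _ => k.val) ?_ ?_ ?_ ?_ ?_
  · simp
  · intro a _; exact Finset.mem_range.mpr (ZMod.val_lt a)
  · intro a ha; exact ZMod.val_cast_of_lt (Finset.mem_range.mp ha)
  · intro a _; exact ZMod.natCast_zmod_val a
  · intro a ha; rw [ZMod.val_cast_of_lt (Finset.mem_range.mp ha)]

theorem qstar_eq (n : ℕ) [NeZero n] (hbar q : ℂ) (F G : ZMod n → PolyZW) (m : ZMod n) :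
    qstar n hbar q F G m = ∑ j ∈ Finset.range n, ∑ k : ZMod n, cc hbar q j •
      ((ZL q ^ j) (F k) * (SL q ^ j) ((WL q ^ j) ((GL' q ^ k.val) (G (m - k - j))))) := by
  unfold qstar
  refine Finset.sum_congr rfl fun j _ => ?_
  rw [sum_range_zmod]
  refine Finset.sum_congr rfl fun k _ => ?_
  simp only [Module.End.pow_apply, ZMod.natCast_zmod_val, cc, div_eq_mul_inv]
  rfl

theorem sum_antidiag (n : ℕ) (T : ℕ → ℕ → PolyZW) (hT : ∀ a i, n ≤ a + i → T a i = 0) :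
    ∑ r ∈ Finset.range n, ∑ x ∈ Finset.HasAntidiagonal.antidiagonal r, T x.1 x.2 =
      ∑ a ∈ Finset.range n, ∑ i ∈ Finset.range n, T a i := by
  rw [Finset.sum_sigma', ← Finset.sum_product']
  refine Finset.sum_bij_ne_zero (fun x _ _ => x.2) ?_ ?_ ?_ ?_
  · rintro ⟨r, x⟩ h _
    simp only [Finset.mem_sigma, Finset.mem_range, Finset.HasAntidiagonal.mem_antidiagonal] at h
    simp only [Finset.mem_product, Finset.mem_range]
    omega
  · rintro ⟨r, x⟩ h _ ⟨r', x'⟩ h' _ e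
    simp only [Finset.mem_sigma, Finset.mem_range, Finset.HasAntidiagonal.mem_antidiagonal] at h h' e
    subst e
    obtain rfl : r = r' := by omega
    rfl
  · rintro x h hne
    refine ⟨⟨x.1 + x.2, x⟩, ?_, hne, rfl⟩
    simp only [Finset.mem_sigma, Finset.mem_range, Finset.HasAntidiagonal.mem_antidiagonal, and_true]
    by_contra hlt
    exact hne (hT _ _ (by omega))
  · intros; rfl

theorem lhs_eq (n : ℕ) [NeZero n] (hn : 2 ≤ n) (q hbar : ℂ) (hq1 : q ≠ 1)
    (hqn : q ^ n = 1) (h0 : ∀ j, 0 < j → j < n → qint q j ≠ 0) (F G H : ZMod n → PolyZW)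
    (m : ZMod n) :
    qstar n hbar q (qstar n hbar q F G) H m =
      ∑ k : ZMod n, ∑ l : ZMod n, ∑ j ∈ Finset.range n, ∑ a ∈ Finset.range n,
        ∑ i ∈ Finset.range n, (cc hbar q j * cc hbar q a * cc hbar q i) •
        (((ZL q ^ a) ((ZL q ^ j) (F k)) *
      (SL q ^ a) ((ZL q ^ i) ((SL q ^ j) ((WL q ^ j) ((GL' q ^ k.val) (G l)))))) *
      (SL q ^ (a + i)) ((WL q ^ (a + i)) ((GL' q ^ (k.val + l.val + j))
        (H (m - k - l - j - a - i))))) := by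
  have e1 : qstar n hbar q (qstar n hbar q F G) H m =
      ∑ r ∈ Finset.range n, ∑ K : ZMod n, ∑ j ∈ Finset.range n, ∑ k : ZMod n,
        (cc hbar q r * cc hbar q j) • ((ZL q ^ r) ((ZL q ^ j) (F k) *
          (SL q ^ j) ((WL q ^ j) ((GL' q ^ k.val) (G (K - k - j))))) *
          (SL q ^ r) ((WL q ^ r) ((GL' q ^ K.val) (H (m - K - r))))) := by
    rw [qstar_eq]
    simp only [qstar_eq n hbar q F G, map_sum, map_smul, Finset.sum_mul, Finset.smul_sum,
      smul_mul_assoc, smul_smul]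
  have e2 : qstar n hbar q (qstar n hbar q F G) H m =
      ∑ k : ZMod n, ∑ l : ZMod n, ∑ j ∈ Finset.range n, ∑ r ∈ Finset.range n,
        (cc hbar q r * cc hbar q j) • ((ZL q ^ r) ((ZL q ^ j) (F k) *
          (SL q ^ j) ((WL q ^ j) ((GL' q ^ k.val) (G l)))) *
          (SL q ^ r) ((WL q ^ r) ((GL' q ^ (k.val + l.val + j)) (H (m - k - l - j - r))))) := by
    rw [e1]
    calc _ = ∑ k : ZMod n, ∑ j ∈ Finset.range n, ∑ r ∈ Finset.range n, ∑ K : ZMod n, 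
        (cc hbar q r * cc hbar q j) • ((ZL q ^ r) ((ZL q ^ j) (F k) *
          (SL q ^ j) ((WL q ^ j) ((GL' q ^ k.val) (G (K - k - j))))) *
          (SL q ^ r) ((WL q ^ r) ((GL' q ^ K.val) (H (m - K - r))))) := by
          rw [Finset.sum_congr rfl fun r _ => Finset.sum_comm, Finset.sum_comm,
            Finset.sum_congr rfl fun j _ => Finset.sum_congr rfl fun r _ => Finset.sum_comm,
            Finset.sum_congr rfl fun j _ => Finset.sum_comm, Finset.sum_comm]
      _ = ∑ k : ZMod n, ∑ j ∈ Finset.range n, ∑ r ∈ Finset.range n, ∑ l : ZMod n, 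
        (cc hbar q r * cc hbar q j) • ((ZL q ^ r) ((ZL q ^ j) (F k) *
          (SL q ^ j) ((WL q ^ j) ((GL' q ^ k.val) (G l)))) *
          (SL q ^ r) ((WL q ^ r) ((GL' q ^ (k.val + l.val + j)) (H (m - k - l - j - r))))) := by
          refine Finset.sum_congr rfl fun k _ => Finset.sum_congr rfl fun j _ =>
            Finset.sum_congr rfl fun r _ => ?_
          refine Fintype.sum_equiv (Equiv.subRight (k + (j : ZMod n))) _ _ fun K => ?_
          simp only [Equiv.subRight_apply]
          have g1 : K - k - (j : ZMod n) = K - (k + j) := by ring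
          have g2 : m - k - (K - (k + (j : ZMod n))) - j - r = m - K - r := by ring
          have g3 : GL' q ^ (k.val + (K - (k + (j : ZMod n))).val + j) = GL' q ^ K.val := by
            apply pow_eq_pow_of_modEq _ (GL_pow_n q n hqn)
            rw [← ZMod.natCast_eq_natCast_iff]
            simp only [Nat.cast_add, ZMod.natCast_zmod_val]
            ring
          rw [g1, g2, g3]
      _ = _ := by
          refine Finset.sum_congr rfl fun k _ => ?_
          rw [Finset.sum_congr rfl fun j _ => Finset.sum_comm, Finset.sum_comm]
  rw [e2]
  refine Finset.sum_congr rfl fun k _ => Finset.sum_congr rfl fun l _ =>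
    Finset.sum_congr rfl fun j _ => ?_
  rw [← sum_antidiag n]
  · refine Finset.sum_congr rfl fun r hr => ?_
    have L := ZL_leib_pow q hq1 n h0 r (Finset.mem_range.mp hr) ((ZL q ^ j) (F k))
      ((SL q ^ j) ((WL q ^ j) ((GL' q ^ k.val) (G l))))
    have e3 : ∀ P Q : PolyZW, (cc hbar q r * cc hbar q j) • (P * Q) =
        (cc hbar q j * (Complex.I * hbar / 2) ^ r) • (((qfact q r)⁻¹ • P) * Q) := by
      intro P Q
      rw [smul_mul_assoc, smul_smul]; congr 1; simp only [cc]; ring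
    rw [e3, L, Finset.sum_mul, Finset.smul_sum]
    refine Finset.sum_congr rfl fun x hx => ?_
    have hx := Finset.HasAntidiagonal.mem_antidiagonal.mp hx
    rw [smul_mul_assoc, smul_smul, ← hx]
    have g4 : m - k - l - j - ((x.1 + x.2 : ℕ) : ZMod n) = m - k - l - j - x.1 - x.2 := by
      push_cast; ring
    rw [g4]
    congr 1
    simp only [cc]; ring
  · intro a i hai
    rw [pow_n_zero_aux (WL_pow_n q n hn hqn) hai, map_zero, mul_zero, smul_zero]

theorem rhs_eq (n : ℕ) [NeZero n] (hn : 2 ≤ n) (q hbar : ℂ) (hq0 : q ≠ 0)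
    (hqn : q ^ n = 1) (h0 : ∀ j, 0 < j → j < n → qint q j ≠ 0) (F G H : ZMod n → PolyZW)
    (m : ZMod n) :
    qstar n hbar q F (qstar n hbar q G H) m =
      ∑ k : ZMod n, ∑ l : ZMod n, ∑ i ∈ Finset.range n, ∑ a ∈ Finset.range n,
        ∑ j ∈ Finset.range n, (cc hbar q j * cc hbar q a * cc hbar q i) •
        q⁻¹ ^ (a * j) • ((ZL q ^ (a + j)) (F k) *
      ((SL q ^ (a + j)) ((WL q ^ j) ((GL' q ^ k.val) ((ZL q ^ i) (G l)))) *
       (SL q ^ (a + j)) ((TL q ^ j) ((WL q ^ a) ((GL' q ^ k.val)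
        ((SL q ^ i) ((WL q ^ i) ((GL' q ^ l.val) (H (m - k - l - j - a - i)))))))))) := by
  have e1 : qstar n hbar q F (qstar n hbar q G H) m =
      ∑ s ∈ Finset.range n, ∑ k : ZMod n, ∑ i ∈ Finset.range n, ∑ l : ZMod n,
        (cc hbar q s * cc hbar q i) • ((ZL q ^ s) (F k) *
          (SL q ^ s) ((WL q ^ s) ((GL' q ^ k.val) ((ZL q ^ i) (G l)) * (GL' q ^ k.val)
          ((SL q ^ i) ((WL q ^ i) ((GL' q ^ l.val) (H (m - k - s - l - i)))))))) := by
    rw [qstar_eq]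
    simp only [qstar_eq n hbar q G H, map_sum, map_smul, Finset.mul_sum, Finset.smul_sum,
      mul_smul_comm, smul_smul, powmul (GL_mul q)]
  rw [e1, Finset.sum_comm]
  refine Finset.sum_congr rfl fun k _ => ?_
  rw [Finset.sum_congr rfl fun s _ => Finset.sum_comm, Finset.sum_comm]
  refine Finset.sum_congr rfl fun l _ => ?_
  rw [Finset.sum_comm]
  refine Finset.sum_congr rfl fun i _ => ?_
  rw [← sum_antidiag n]
  · refine Finset.sum_congr rfl fun r hr => ?_
    have e3 : ∀ P Q : PolyZW, (cc hbar q r * cc hbar q i) • (P * (SL q ^ r) Q) =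
        (cc hbar q i * (Complex.I * hbar / 2) ^ r) • (P * (SL q ^ r) ((qfact q r)⁻¹ • Q)) := by
      intro P Q
      rw [map_smul, mul_smul_comm, smul_smul]; congr 1; simp only [cc]; ring
    rw [e3, WL_leib_pow q hq0 n h0 r (Finset.mem_range.mp hr), map_sum, Finset.mul_sum,
      Finset.smul_sum]
    refine Finset.sum_congr rfl fun x hx => ?_
    have hx := Finset.HasAntidiagonal.mem_antidiagonal.mp hx
    have g4 : m - k - (r : ZMod n) - l - i = m - k - l - x.2 - x.1 - i := by
      rw [← hx]; push_cast; ring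
    rw [g4, ← hx]
    simp only [map_smul, mul_smul_comm, smul_smul, powmul (SL_mul q)]
    congr 1
    simp only [cc]; ring
  · intro a i hai
    rw [pow_n_zero_aux (ZL_pow_n q n hn hqn) hai, zero_mul, smul_zero, smul_zero]

theorem qstar_assoc (n : ℕ) (hn : 2 ≤ n) (q : ℂ)
    (hq : q = Complex.exp (2 * Real.pi * Complex.I / n)) (hbar : ℂ)
    (F G H : ZMod n → PolyZW) :
    qstar n hbar q (qstar n hbar q F G) H = qstar n hbar q F (qstar n hbar q G H) := by
  have : NeZero n := ⟨by omega⟩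
  have hp : IsPrimitiveRoot q n := by
    rw [hq]; exact Complex.isPrimitiveRoot_exp n (by omega)
  have hq1 : q ≠ 1 := hp.ne_one (by omega)
  have hq0 : q ≠ 0 := hp.ne_zero (by omega)
  have hqn := hp.pow_eq_one
  have h0 : ∀ j, 0 < j → j < n → qint q j ≠ 0 := by
    intro j hj hjn h
    have h2 : qint q j * (q - 1) = q ^ j - 1 := geom_sum_mul q j
    rw [h, zero_mul] at h2
    exact hp.pow_ne_one_of_pos_of_lt (by omega) hjn (sub_eq_zero.mp h2.symm)
  funext m
  rw [lhs_eq n hn q hbar hq1 hqn h0, rhs_eq n hn q hbar hq0 hqn h0]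
  refine Finset.sum_congr rfl fun k _ => Finset.sum_congr rfl fun l _ => ?_
  simp only [term_eq q hq0]
  rw [Finset.sum_comm, Finset.sum_congr rfl fun a _ => Finset.sum_comm, Finset.sum_comm]
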